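/- Let (s,x̄) ∈ I × U be such that the vectors c(s,t(s,x̄)) and ∂/∂s(c(s,t(s,x̄))) are linearly independent, and let z ∈ ℝ. Then G(s,x̄) = z and G_s(s,x̄) = 0 hold simultaneously if and only if x̄ = x(s,t(s,x̄)) and z = g(s,t(s,x̄)). (That is, the discriminant set of the family G̃(s,x̄,z) = G(s,x̄) − z coincides with the image of the improper affine map q = (x,g).) -/

import Mathlib

noncomputable section

/-- `det2 u v` is the determinant of the 2×2 matrix with columns `u` and `v`. -/
def det2 (u v : ℝ × ℝ) : ℝ := u.1 * v.2 - u.2 * v.1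

/-- Partial derivative with respect to the first coordinate `s`. -/
def pds (f : ℝ × ℝ → ℝ) (p : ℝ × ℝ) : ℝ := fderiv ℝ f p (1, 0)

/-- Partial derivative with respect to the second coordinate `t`. -/
def pdt (f : ℝ × ℝ → ℝ) (p : ℝ × ℝ) : ℝ := fderiv ℝ f p (0, 1)

/-- The planar map `x = (A, B)`. -/
def xmap (A B : ℝ × ℝ → ℝ) (p : ℝ × ℝ) : ℝ × ℝ := (A p, B p)

/-- The conjugate map `c = (-D, C)`. -/
def cmap (C D : ℝ × ℝ → ℝ) (p : ℝ × ℝ) : ℝ × ℝ := (-D p, C p)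

/-- `x_s = (A_s, B_s)`. -/
def xs (A B : ℝ × ℝ → ℝ) (p : ℝ × ℝ) : ℝ × ℝ := (pds A p, pds B p)

/-- `x_t = (A_t, B_t)`. -/
def xt (A B : ℝ × ℝ → ℝ) (p : ℝ × ℝ) : ℝ × ℝ := (pdt A p, pdt B p)

/-- `δ = A_s B_t - A_t B_s = [x_s, x_t]`. -/
def deltaMap (A B : ℝ × ℝ → ℝ) (p : ℝ × ℝ) : ℝ :=
  pds A p * pdt B p - pdt A p * pds B p

/-!
Fix `x̄` and let `x'` and `c'` be the derivatives of `x` and `c` along the curve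
`s ↦ (s, t(s, x̄))`. There `dg = [dx, c]` reads `G_s = [x', c]`, while differentiating the incidence
relation `[x̄ - x, c] = 0` gives `[x', c] = [x̄ - x, c']`. So `G_s = 0` says that `x̄ - x`, already
parallel to `c`, is also parallel to `c'`; as `c` and `c'` are linearly independent, this means
`x̄ = x`.
-/

open Topology

section Determinant

variable (u v w : ℝ × ℝ)

theorem det2_add_left : det2 (u + v) w = det2 u w + det2 v w := by
  simp only [det2, Prod.fst_add, Prod.snd_add]
  ring

theorem det2_smul_left (a : ℝ) : det2 (a • u) v = a * det2 u v := by
  simp only [det2, Prod.smul_fst, Prod.smul_snd, smul_eq_mul]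
  ring

theorem det2_neg_left : det2 (-u) v = -det2 u v := by
  simpa using det2_smul_left u v (-1)

theorem det2_zero_left : det2 0 v = 0 := by
  simpa using det2_smul_left 0 v 0

theorem det2_smul_eq_sub : det2 u v • w = det2 w v • u - det2 w u • v := by
  ext <;>
    simp only [det2, Prod.smul_fst, Prod.smul_snd, Prod.fst_sub, Prod.snd_sub, smul_eq_mul] <;>
    ring

variable {u v w}

theorem linearIndependent_pair_iff_det2_ne_zero :
    LinearIndependent ℝ ![u, v] ↔ det2 u v ≠ 0 := by
  have hrow : ⇑(LinearEquiv.finTwoArrow ℝ ℝ).symm.toLinearMap ∘ ![u, v] =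
      (Matrix.of ![![u.1, u.2], ![v.1, v.2]]).row := by
    ext i j
    fin_cases i <;> fin_cases j <;> rfl
  rw [← LinearMap.linearIndependent_iff _ (LinearEquiv.finTwoArrow ℝ ℝ).symm.ker, hrow,
    Matrix.linearIndependent_rows_iff_isUnit, Matrix.isUnit_iff_isUnit_det, isUnit_iff_ne_zero,
    Matrix.det_fin_two_of, det2]

theorem det2_eq_zero_iff_eq_zero_of_linearIndependent (huv : LinearIndependent ℝ ![u, v])
    (hwu : det2 w u = 0) : det2 w v = 0 ↔ w = 0 := by
  refine ⟨fun hwv => ?_, fun hw => hw ▸ det2_zero_left v⟩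
  have hsmul : det2 u v • w = 0 := by
    rw [det2_smul_eq_sub, hwu, hwv, zero_smul, zero_smul, sub_zero]
  exact (smul_eq_zero.mp hsmul).resolve_left (linearIndependent_pair_iff_det2_ne_zero.mp huv)

end Determinant

section Curve

variable {x c : ℝ → ℝ × ℝ} {x' c' y : ℝ × ℝ} {s : ℝ}

theorem hasDerivAt_det2 (hx : HasDerivAt x x' s) (hc : HasDerivAt c c' s) :
    HasDerivAt (fun r => det2 (x r) (c r)) (det2 x' (c s) + det2 (x s) c') s := by
  have hx₁ : HasDerivAt (fun r => (x r).1) x'.1 s :=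
    (ContinuousLinearMap.fst ℝ ℝ ℝ).hasFDerivAt.comp_hasDerivAt s hx
  have hx₂ : HasDerivAt (fun r => (x r).2) x'.2 s :=
    (ContinuousLinearMap.snd ℝ ℝ ℝ).hasFDerivAt.comp_hasDerivAt s hx
  have hc₁ : HasDerivAt (fun r => (c r).1) c'.1 s :=
    (ContinuousLinearMap.fst ℝ ℝ ℝ).hasFDerivAt.comp_hasDerivAt s hc
  have hc₂ : HasDerivAt (fun r => (c r).2) c'.2 s :=
    (ContinuousLinearMap.snd ℝ ℝ ℝ).hasFDerivAt.comp_hasDerivAt s hc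
  refine ((hx₁.mul hc₂).sub (hx₂.mul hc₁)).congr_deriv ?_
  simp only [det2]
  ring

theorem det2_deriv_eq_of_eventually_det2_sub_eq_zero (hx : HasDerivAt x x' s)
    (hc : HasDerivAt c c' s) (hy : ∀ᶠ r in 𝓝 s, det2 (y - x r) (c r) = 0) :
    det2 x' (c s) = det2 (y - x s) c' := by
  have hzero : HasDerivAt (fun r => det2 (y - x r) (c r)) 0 s :=
    (hasDerivAt_const s 0).congr_of_eventuallyEq hy
  have hsum : det2 (-x') (c s) + det2 (y - x s) c' = 0 :=
    (hasDerivAt_det2 (hx.const_sub y) hc).unique hzero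
  rwa [det2_neg_left, neg_add_eq_zero] at hsum

theorem deriv_eq_zero_iff_of_eventually_det2_sub_eq_zero {g : ℝ → ℝ} (hx : HasDerivAt x x' s)
    (hg : HasDerivAt g (det2 x' (c s)) s) (hy : ∀ᶠ r in 𝓝 s, det2 (y - x r) (c r) = 0)
    (hli : LinearIndependent ℝ ![c s, deriv c s]) :
    deriv g s = 0 ↔ y = x s := by
  have hc : DifferentiableAt ℝ c s := differentiableAt_of_deriv_ne_zero (hli.ne_zero 1)
  rw [hg.deriv, det2_deriv_eq_of_eventually_det2_sub_eq_zero hx hc.hasDerivAt hy,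
    det2_eq_zero_iff_eq_zero_of_linearIndependent hli hy.self_of_nhds, sub_eq_zero]

end Curve

section Graph

variable {t : ℝ → ℝ} {t' s : ℝ}

theorem hasDerivAt_comp_graph {f : ℝ × ℝ → ℝ} (hf : DifferentiableAt ℝ f (s, t s))
    (ht : HasDerivAt t t' s) :
    HasDerivAt (fun r => f (r, t r)) (pds f (s, t s) + t' * pdt f (s, t s)) s := by
  have hgraph : HasDerivAt (fun r => (r, t r)) ((1, 0) + t' • (0, 1)) s := by
    simpa using (hasDerivAt_id s).prodMk ht
  simpa only [map_add, map_smul, smul_eq_mul] using! hf.hasFDerivAt.comp_hasDerivAt s hgraph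

theorem hasDerivAt_xmap_graph {A B : ℝ × ℝ → ℝ} (hA : DifferentiableAt ℝ A (s, t s))
    (hB : DifferentiableAt ℝ B (s, t s)) (ht : HasDerivAt t t' s) :
    HasDerivAt (fun r => xmap A B (r, t r)) (xs A B (s, t s) + t' • xt A B (s, t s)) s :=
  (hasDerivAt_comp_graph hA ht).prodMk (hasDerivAt_comp_graph hB ht)

end Graph

theorem discriminant_eq_image_of_affine_map_general
    {A B C D g : ℝ × ℝ → ℝ} {t : ℝ → ℝ} {s : ℝ} {xb : ℝ × ℝ}
    (hA : DifferentiableAt ℝ A (s, t s)) (hB : DifferentiableAt ℝ B (s, t s))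
    (hg : DifferentiableAt ℝ g (s, t s))
    (hgs : pds g (s, t s) = det2 (xs A B (s, t s)) (cmap C D (s, t s)))
    (hgt : pdt g (s, t s) = det2 (xt A B (s, t s)) (cmap C D (s, t s)))
    (ht : DifferentiableAt ℝ t s)
    (hteq : ∀ᶠ r in 𝓝 s, det2 (xb - xmap A B (r, t r)) (cmap C D (r, t r)) = 0)
    (hli : LinearIndependent ℝ ![cmap C D (s, t s), deriv (fun r => cmap C D (r, t r)) s])
    (z : ℝ) :
    (g (s, t s) = z ∧ deriv (fun r => g (r, t r)) s = 0) ↔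
      (xb = xmap A B (s, t s) ∧ z = g (s, t s)) := by
  have hx := hasDerivAt_xmap_graph hA hB ht.hasDerivAt
  have hG : HasDerivAt (fun r => g (r, t r))
      (det2 (xs A B (s, t s) + deriv t s • xt A B (s, t s)) (cmap C D (s, t s))) s := by
    rw [det2_add_left, det2_smul_left, ← hgs, ← hgt]
    exact hasDerivAt_comp_graph hg ht.hasDerivAt
  rw [deriv_eq_zero_iff_of_eventually_det2_sub_eq_zero hx hG hteq hli, and_comm, eq_comm (a := z)]

theorem discriminant_eq_image_of_affine_map
    (Ω : Set (ℝ × ℝ)) (hΩ : IsOpen Ω)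
    (A B C D : ℝ × ℝ → ℝ)
    (hA : ContDiffOn ℝ (⊤ : ℕ∞) A Ω) (hB : ContDiffOn ℝ (⊤ : ℕ∞) B Ω)
    (hC : ContDiffOn ℝ (⊤ : ℕ∞) C Ω) (hD : ContDiffOn ℝ (⊤ : ℕ∞) D Ω)
    (hCR1 : ∀ p ∈ Ω, pds A p = - pdt D p)
    (hCR2 : ∀ p ∈ Ω, pdt A p = pds D p)
    (hCR3 : ∀ p ∈ Ω, pds B p = pdt C p)
    (hCR4 : ∀ p ∈ Ω, pdt B p = - pds C p)
    (g : ℝ × ℝ → ℝ) (hg : ContDiffOn ℝ (⊤ : ℕ∞) g Ω)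
    (hgs : ∀ p ∈ Ω, pds g p = det2 (xs A B p) (cmap C D p))
    (hgt : ∀ p ∈ Ω, pdt g p = det2 (xt A B p) (cmap C D p))
    (s₀ t₀ : ℝ) (hst₀ : (s₀, t₀) ∈ Ω)
    (hne₀ : det2 (xt A B (s₀, t₀)) (cmap C D (s₀, t₀)) ≠ 0)
    (I : Set ℝ) (U : Set (ℝ × ℝ)) (hI : IsOpen I) (hU : IsOpen U)
    (hs₀ : s₀ ∈ I) (hx₀ : xmap A B (s₀, t₀) ∈ U)
    (T : ℝ → ℝ × ℝ → ℝ)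
    (hT : ContDiffOn ℝ (⊤ : ℕ∞) (fun q : ℝ × (ℝ × ℝ) => T q.1 q.2) (I ×ˢ U))
    (hT₀ : T s₀ (xmap A B (s₀, t₀)) = t₀)
    (hTmem : ∀ s ∈ I, ∀ xb ∈ U, (s, T s xb) ∈ Ω)
    (hTeq : ∀ s ∈ I, ∀ xb ∈ U,
      det2 (xb - xmap A B (s, T s xb)) (cmap C D (s, T s xb)) = 0)
    (s : ℝ) (xb : ℝ × ℝ) (hs : s ∈ I) (hxb : xb ∈ U)
    (hli : LinearIndependent ℝ
      ![cmap C D (s, T s xb), deriv (fun s' => cmap C D (s', T s' xb)) s])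
    (z : ℝ)
    :
    (g (s, T s xb) = z ∧ deriv (fun s' => g (s', T s' xb)) s = 0) ↔
      (xb = xmap A B (s, T s xb) ∧ z = g (s, T s xb)) := by
  have hp : (s, T s xb) ∈ Ω := hTmem s hs xb hxb
  have hdiff {f : ℝ × ℝ → ℝ} (hf : ContDiffOn ℝ (⊤ : ℕ∞) f Ω) : DifferentiableAt ℝ f (s, T s xb) :=
    (hf.differentiableOn (by simp)).differentiableAt (hΩ.mem_nhds hp)
  have hTs : DifferentiableAt ℝ (fun r => T r xb) s :=
    ((hT.differentiableOn (by simp)).differentiableAt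
      ((hI.prod hU).mem_nhds ⟨hs, hxb⟩)).comp (f := fun r => (r, xb)) s (by fun_prop)
  have hTeq_nhds := Filter.eventually_of_mem (hI.mem_nhds hs) fun r hr => hTeq r hr xb hxb
  exact discriminant_eq_image_of_affine_map_general (t := fun r => T r xb)
    (hdiff hA) (hdiff hB) (hdiff hg) (hgs _ hp) (hgt _ hp) hTs hTeq_nhds hli z
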